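/- Let n > 3 be an integer and a, b, c ∈ ℂ with abc ≠ 0. Set e₁ = -((n-1)b)/((n-2)a) and e₂ = (nc)/((n-2)a). Then the discriminant of f(x) = xⁿ + ax² + bx + c equals (-1)^{n(n-1)/2} · n^{-1} · (n-2)^{n-1} · a^{n-1} · [ n²e₂^{n-1} + 4a²e₂ + 2abe₁ + b² + (1+(-1)^{n-1})·b·n·((e₁/2)² - e₂)^{(n-1)/2} + n·Σ_{i=0}^{⌊(n-2)/2⌋} (4ae₂ + ((n-1)/(n-1-2i))·be₁) · C(n-2, 2i) · (e₁/2)^{n-2-2i} · ((e₁/2)² - e₂)^{i} ], where the term with exponent (n-1)/2 is present only when n is odd (for n even its coefficient 1+(-1)^{n-1} vanishes, and for n odd the exponent (n-1)/2 is an integer). -/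

import Mathlib

open Polynomial Finset

/-- A sum over `range N` whose odd-indexed terms vanish is the sum of its even-indexed terms. -/
lemma sum_range_eq_sum_even {M : Type*} [AddCommMonoid M] (g : ℕ → M)
    (hg : ∀ i, g (2 * i + 1) = 0) (N : ℕ) :
    ∑ k ∈ range (N + 1), g k = ∑ i ∈ range (N / 2 + 1), g (2 * i) := by
  induction N with
  | zero => simp
  | succ N ih =>
    rw [sum_range_succ, ih]
    obtain ⟨p, rfl | rfl⟩ := N.even_or_odd'
    · rw [hg, add_zero]
      congr 2
      omega
    · rw [show (2 * p + 1 + 1) / 2 + 1 = (2 * p + 1) / 2 + 1 + 1 by omega, sum_range_succ _ (_ + 1)]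
      congr 2
      omega

/-- The even part of the binomial expansion. -/
lemma add_pow_add_sub_pow {R : Type*} [CommRing R] (h d : R) (m : ℕ) :
    (h + d) ^ m + (h - d) ^ m
      = 2 * ∑ i ∈ range (m / 2 + 1), (m.choose (2 * i) : R) * h ^ (m - 2 * i) * (d ^ 2) ^ i := by
  rw [add_comm h d, sub_eq_neg_add, add_pow, add_pow, ← sum_add_distrib, sum_range_eq_sum_even,
    mul_sum]
  · refine sum_congr rfl fun i _ => ?_
    rw [(even_two_mul i).neg_pow, pow_mul]
    ring
  · intro i
    rw [(odd_two_mul_add_one i).neg_pow]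
    ring

/-- The product of squared differences of a family is, up to sign, the product of the differences
over all ordered pairs of distinct indices. -/
lemma prod_lt_sub_sq {R : Type*} [CommRing R] {n : ℕ} (ξ : Fin n → R) :
    ∏ p ∈ univ.filter (fun p : Fin n × Fin n => p.1 < p.2), (ξ p.1 - ξ p.2) ^ 2
      = (-1) ^ (n * (n - 1) / 2) * ∏ i, ∏ j ∈ univ.erase i, (ξ i - ξ j) := by
  set L := univ.filter fun p : Fin n × Fin n => p.1 < p.2 with hL
  set G := univ.filter fun p : Fin n × Fin n => p.2 < p.1 with hG
  have hGL : G = L.map (Equiv.prodComm _ _).toEmbedding := by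
    ext ⟨i, j⟩
    simp [hL, hG]
  have hdisj : Disjoint L G := by
    rw [Finset.disjoint_left]
    simp only [hL, hG, mem_filter, mem_univ, true_and]
    exact fun _ h h' => lt_asymm h h'
  have hunion : (univ : Finset (Fin n)).offDiag = L.disjUnion G hdisj := by
    ext ⟨i, j⟩
    simp [hL, hG]
  have hcard : n * (n - 1) / 2 = L.card := by
    have h := congrArg Finset.card hunion
    rw [offDiag_card, card_disjUnion, hGL, card_map, card_univ, Fintype.card_fin] at h
    rw [Nat.mul_sub_one]
    omega
  have hoff : ∏ i, ∏ j ∈ univ.erase i, (ξ i - ξ j)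
      = ∏ p ∈ (univ : Finset (Fin n)).offDiag, (ξ p.1 - ξ p.2) := by
    rw [prod_sigma']
    refine prod_bij (fun p _ => (p.1, p.2)) ?_ ?_ ?_ ?_
    · rintro ⟨i, j⟩ h
      simpa [eq_comm] using h
    · rintro ⟨i, j⟩ _ ⟨k, l⟩ _ h
      simpa using h
    · rintro ⟨i, j⟩ h
      exact ⟨⟨i, j⟩, by simpa [eq_comm] using h, rfl⟩
    · intros
      rfl
  rw [hoff, hunion, prod_disjUnion, hGL, prod_map, ← prod_mul_distrib, hcard, ← prod_const,
    ← prod_mul_distrib]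
  refine prod_congr rfl fun p _ => ?_
  simp only [Equiv.coe_toEmbedding, Equiv.prodComm_apply, Prod.fst_swap, Prod.snd_swap]
  ring

/-- The derivative of a product of linear factors at one of its roots. -/
lemma eval_derivative_prod_X_sub_C {R ι : Type*} [CommRing R] [Fintype ι] [DecidableEq ι]
    (ξ : ι → R) (i : ι) :
    (derivative (∏ j, (X - C (ξ j)))).eval (ξ i) = ∏ j ∈ univ.erase i, (ξ i - ξ j) := by
  have h := Lagrange.eval_nodal_derivative_eval_node_eq (s := univ) (v := ξ) (mem_univ i)
  rwa [Lagrange.eval_nodal] at h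

/-- Newton-type expansion of `2 a r s (r ^ (n - 2) + s ^ (n - 2)) + b (r ^ (n - 1) + s ^ (n - 1))`
for `r, s = h ± d`, with `n = m + 2`. -/
lemma power_sums_expansion (m : ℕ) (a b e h d : ℂ) :
    2 * a * e * ((h + d) ^ m + (h - d) ^ m) + b * ((h + d) ^ (m + 1) + (h - d) ^ (m + 1))
      = (1 + (-1) ^ (m + 1)) * b * (d ^ 2) ^ ((m + 1) / 2)
        + ∑ i ∈ range (m / 2 + 1),
            (4 * a * e + ((m : ℂ) + 1) / ((m : ℂ) + 1 - 2 * i) * b * (2 * h))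
              * (m.choose (2 * i) : ℂ) * h ^ (m - 2 * i) * (d ^ 2) ^ i := by
  have hlow : ∀ i ∈ range (m / 2 + 1),
      ((m + 1).choose (2 * i) : ℂ) * h ^ (m + 1 - 2 * i) * (d ^ 2) ^ i
        = ((m : ℂ) + 1) / ((m : ℂ) + 1 - 2 * i) * h * (m.choose (2 * i) : ℂ)
          * h ^ (m - 2 * i) * (d ^ 2) ^ i := by
    intro i hi
    have hle : 2 * i ≤ m := by
      rw [mem_range] at hi
      omega
    have hcast : ((m + 1 - 2 * i : ℕ) : ℂ) = (m : ℂ) + 1 - 2 * i := by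
      rw [Nat.cast_sub (by omega)]
      push_cast
      ring
    have hne : (m : ℂ) + 1 - 2 * i ≠ 0 := by
      rw [← hcast]
      exact Nat.cast_ne_zero.mpr (by omega)
    have hchoose : (m.choose (2 * i) : ℂ) * (m + 1)
        = ((m + 1).choose (2 * i) : ℂ) * ((m : ℂ) + 1 - 2 * i) := by
      rw [← hcast]
      exact_mod_cast Nat.choose_mul_succ_eq m (2 * i)
    rw [show m + 1 - 2 * i = m - 2 * i + 1 by omega, pow_succ]
    field_simp
    linear_combination (-h ^ (m - 2 * i) * h * d ^ (2 * i)) * hchoose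
  have hsum : (h + d) ^ (m + 1) + (h - d) ^ (m + 1)
      = (1 + (-1) ^ (m + 1)) * (d ^ 2) ^ ((m + 1) / 2)
        + 2 * ∑ i ∈ range (m / 2 + 1), ((m : ℂ) + 1) / ((m : ℂ) + 1 - 2 * i) * h
            * (m.choose (2 * i) : ℂ) * h ^ (m - 2 * i) * (d ^ 2) ^ i := by
    rw [add_pow_add_sub_pow, ← sum_congr rfl hlow]
    obtain ⟨p, rfl | rfl⟩ := m.even_or_odd'
    · rw [(odd_two_mul_add_one p).neg_one_pow, show (2 * p + 1) / 2 = 2 * p / 2 by omega]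
      ring
    · rw [show (2 * p + 1 + 1) / 2 = p + 1 by omega, show (2 * p + 1) / 2 = p by omega,
        sum_range_succ _ (p + 1), show 2 * p + 1 + 1 = 2 * (p + 1) by ring,
        (even_two_mul (p + 1)).neg_one_pow]
      simp
      ring
  rw [hsum, add_pow_add_sub_pow]
  simp only [mul_add, mul_sum, add_mul, sum_add_distrib]
  rw [add_left_comm]
  congr 1
  · ring
  · congr 1 <;> exact sum_congr rfl fun i _ => by ring

/-- **Discriminant of `x^n + a x^2 + b x + c`** (Theorem 3.1).
For a monic polynomial `f` over `ℂ` with roots `ξ₁, …, ξ_n` (with multiplicity),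
the discriminant is `∏_{i<j} (ξ i - ξ j)^2`. -/
theorem discriminant_quadrinomial_x_pow_n_add_ax_sq
    (n : ℕ) (hn : 3 < n) (a b c : ℂ) (habc : a * b * c ≠ 0)
    (e₁ e₂ : ℂ)
    (he₁ : e₁ = -(((n : ℂ) - 1) * b) / (((n : ℂ) - 2) * a))
    (he₂ : e₂ = (n : ℂ) * c / (((n : ℂ) - 2) * a))
    (ξ : Fin n → ℂ)
    (hf : (X ^ n + C a * X ^ 2 + C b * X + C c : ℂ[X])
        = ∏ i : Fin n, (X - C (ξ i))) :
    (∏ p ∈ Finset.univ.filter (fun p : Fin n × Fin n => p.1 < p.2),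
        (ξ p.1 - ξ p.2) ^ 2)
      = (-1 : ℂ) ^ (n * (n - 1) / 2) * (n : ℂ)⁻¹ * ((n : ℂ) - 2) ^ (n - 1)
          * a ^ (n - 1)
          * ((n : ℂ) ^ 2 * e₂ ^ (n - 1) + 4 * a ^ 2 * e₂ + 2 * a * b * e₁ + b ^ 2
            + (1 + (-1 : ℂ) ^ (n - 1)) * b * (n : ℂ)
                * ((e₁ / 2) ^ 2 - e₂) ^ ((n - 1) / 2)
            + (n : ℂ) * ∑ i ∈ Finset.range ((n - 2) / 2 + 1),
                (4 * a * e₂ + ((n : ℂ) - 1) / ((n : ℂ) - 1 - 2 * (i : ℂ)) * b * e₁)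
                  * (Nat.choose (n - 2) (2 * i) : ℂ)
                  * (e₁ / 2) ^ (n - 2 - 2 * i)
                  * ((e₁ / 2) ^ 2 - e₂) ^ i) := by
  obtain ⟨m, rfl⟩ : ∃ m, n = m + 2 := ⟨n - 2, by omega⟩
  have ha : a ≠ 0 := by
    rintro rfl
    simp at habc
  have hc : c ≠ 0 := by
    rintro rfl
    simp at habc
  have hm : (m : ℂ) ≠ 0 := Nat.cast_ne_zero.mpr (by omega)
  have hm2 : (m : ℂ) + 2 ≠ 0 := by exact_mod_cast (by omega : m + 2 ≠ 0)
  push_cast at he₁ he₂ ⊢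
  simp only [show (m : ℂ) + 2 - 2 = m by ring, show (m : ℂ) + 2 - 1 = m + 1 by ring] at he₁ he₂ ⊢
  have hb : (m + 1) * b = -(m * a * e₁) := by
    rw [he₁]
    field_simp
  have hc' : (m + 2) * c = m * a * e₂ := by
    rw [he₂]
    field_simp
  obtain ⟨d, hd⟩ := IsAlgClosed.exists_pow_nat_eq ((e₁ / 2) ^ 2 - e₂) (n := 2) two_pos
  have heval : ∀ x, x ^ (m + 2) + a * x ^ 2 + b * x + c = ∏ i, (x - ξ i) := by
    intro x
    simpa [eval_prod] using congrArg (eval x) hf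
  have hderiv : ∀ i, ∏ j ∈ univ.erase i, (ξ i - ξ j)
      = (m + 2) * ξ i ^ (m + 1) + 2 * a * ξ i + b := by
    intro i
    rw [← eval_derivative_prod_X_sub_C, ← hf]
    simp
    ring
  set r := e₁ / 2 + d with hr
  set s := e₁ / 2 - d with hs
  have hrs : r * s = e₂ := by
    rw [hr, hs]
    linear_combination -hd
  have hadd : r + s = e₁ := by
    rw [hr, hs]
    ring
  have hroot : ∀ i, ξ i * ∏ j ∈ univ.erase i, (ξ i - ξ j)
      = -(m * a) * ((r - ξ i) * (s - ξ i)) := by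
    intro i
    have h0 : ξ i ^ (m + 2) + a * ξ i ^ 2 + b * ξ i + c = 0 := by
      rw [heval]
      exact prod_eq_zero (mem_univ i) (sub_self _)
    rw [hderiv]
    linear_combination (m + 2 : ℂ) * h0 - ξ i * hb - hc' + m * a * hrs - m * a * ξ i * hadd
  have hprod0 : c = (-1) ^ (m + 2) * ∏ i, ξ i := by
    have h := heval 0
    simp only [zero_sub, prod_neg] at h
    simpa using h
  have hcrit : ∀ x, x ^ 2 - e₁ * x + e₂ = 0 →
      (m + 2) * ∏ i, (x - ξ i) = x * ((m + 2) * x ^ (m + 1) + 2 * a * x + b) := by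
    intro x hx
    rw [← heval]
    linear_combination m * a * hx + hc' + x * hb
  have hcr := hcrit r (by rw [← hrs, ← hadd]; ring)
  have hcs := hcrit s (by rw [← hrs, ← hadd]; ring)
  have hprod : (∏ i, ξ i) * ∏ i, ∏ j ∈ univ.erase i, (ξ i - ξ j)
      = (-(m * a)) ^ (m + 2) * ((∏ i, (r - ξ i)) * ∏ i, (s - ξ i)) := by
    rw [← prod_mul_distrib, prod_congr rfl fun i _ => hroot i, prod_mul_distrib, prod_mul_distrib,
      prod_const, card_univ, Fintype.card_fin]
  have hmain : ∏ i, ∏ j ∈ univ.erase i, (ξ i - ξ j)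
      = (m + 2 : ℂ)⁻¹ * m ^ (m + 1) * a ^ (m + 1)
        * (((m + 2) * r ^ (m + 1) + 2 * a * r + b) * ((m + 2) * s ^ (m + 1) + 2 * a * s + b)) := by
    set P := ∏ i, ∏ j ∈ univ.erase i, (ξ i - ξ j)
    have hcP : c * P = (m * a) ^ (m + 2) * ((∏ i, (r - ξ i)) * ∏ i, (s - ξ i)) := by
      rw [hprod0, mul_assoc, hprod, ← mul_assoc, ← mul_pow, neg_one_mul, neg_neg]
    apply mul_left_cancel₀ (mul_ne_zero (pow_ne_zero 2 hm2) hc)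
    have hinv : (m + 2 : ℂ) * (m + 2 : ℂ)⁻¹ = 1 := mul_inv_cancel₀ hm2
    have hscaled : (m + 2 : ℂ) ^ 2 * c * P
        = (m * a) ^ (m + 2) * (((m + 2) * ∏ i, (r - ξ i)) * ((m + 2) * ∏ i, (s - ξ i))) := by
      linear_combination (m + 2 : ℂ) ^ 2 * hcP
    rw [hscaled, hcr, hcs]
    generalize (m + 2) * r ^ (m + 1) + 2 * a * r + b = F
    generalize (m + 2) * s ^ (m + 1) + 2 * a * s + b = G
    linear_combination (m * a) ^ (m + 2) * F * G * hrs
      - m ^ (m + 1) * a ^ (m + 1) * F * G * (hc' + (m + 2) * c * hinv)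
  have hexp := power_sums_expansion m a b e₂ (e₁ / 2) d
  rw [← hr, ← hs, mul_div_cancel₀ e₁ two_ne_zero] at hexp
  have hpow : r ^ (m + 1) * s ^ (m + 1) = e₂ ^ (m + 1) := by
    rw [← mul_pow, hrs]
  rw [prod_lt_sub_sq, hmain, show m + 2 - 1 = m + 1 by omega, ← hd]
  simp only [← mul_assoc]
  simp only [mul_assoc _ (_ + _ + b) (_ + _ + b)]
  congr 1
  linear_combination (m + 2 : ℂ) ^ 2 * hpow + (4 * a ^ 2 + 2 * a * (m + 2) * (r ^ m + s ^ m)) * hrs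
    + 2 * a * b * hadd + (m + 2 : ℂ) * hexp
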